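/- arXiv:2009.09604 — 3 statements merged into one kernel-verified Lean document; each statement's English description precedes it below -/
import Mathlib

section
/- Let ε > 0 and α, β ∈ (0,1) with α > e^ε·β, and let X be a probability distribution on the nonnegative integers. Set τ := (e^ε − e^ε·β − 1 + α)/(α − e^ε·β) (which is > 1 under these hypotheses). Then d_ε(Ber(α)+X ‖ Ber(β)+X) = (α − e^ε·β) · d_{ln τ}((1+X) ‖ X). -/
/-- Hockey-stick divergence on distributions over ℕ. -/
noncomputable def hsDiv (ε : ℝ) (P Q : ℕ → ℝ) : ℝ :=
  ∑' k, max (P k - Real.exp ε * Q k) 0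

/-- The Bernoulli distribution `Ber(p)` as a pmf on ℕ. -/
noncomputable def bern (p : ℝ) : ℕ → ℝ :=
  fun k => if k = 0 then 1 - p else if k = 1 then p else 0

/-- Convolution: pmf of the sum of independent samples from `A` and `B`. -/
noncomputable def conv (A B : ℕ → ℝ) : ℕ → ℝ :=
  fun k => ∑ j ∈ Finset.range (k + 1), A j * B (k - j)

/-- The distribution `1+X`: `X` shifted up by one. -/
noncomputable def shift1 (X : ℕ → ℝ) : ℕ → ℝ :=
  fun k => if k = 0 then 0 else X (k - 1)

theorem conv_bern_eq (p : ℝ) (X : ℕ → ℝ) (k : ℕ) :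
    conv (bern p) X k = (1 - p) * X k + p * shift1 X k := by
  unfold conv
  rcases k with _ | k
  · simp [bern, shift1]
  · rw [Finset.sum_range_succ', Finset.sum_range_succ']
    have h : ∑ j ∈ Finset.range k, bern p (j + 1 + 1) * X (k + 1 - (j + 1 + 1)) = 0 :=
      Finset.sum_eq_zero (fun j _ => by simp [bern])
    rw [h]
    simp [bern, shift1]
    ring

/-- exact identity
`d_ε(Ber(α)+X ‖ Ber(β)+X) = (α − e^ε·β) · d_{ln τ}(1+X ‖ X)`. -/
theorem stmt_17 (ε α β : ℝ) (hε : 0 < ε) (hα0 : 0 < α) (hα1 : α < 1)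
    (hβ0 : 0 < β) (hβ1 : β < 1) (hαβ : Real.exp ε * β < α)
    (X : ℕ → ℝ) (hXnn : ∀ k, 0 ≤ X k) (hXsum : ∑' k, X k = 1) :
    hsDiv ε (conv (bern α) X) (conv (bern β) X)
      = (α - Real.exp ε * β) *
          hsDiv
            (Real.log ((Real.exp ε - Real.exp ε * β - 1 + α) / (α - Real.exp ε * β)))
            (shift1 X) X := by
  have hd : 0 < α - Real.exp ε * β := by linarith
  have he : 1 < Real.exp ε := Real.one_lt_exp_iff.mpr hε
  have hn : 0 < Real.exp ε - Real.exp ε * β - 1 + α := by linarith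
  unfold hsDiv
  rw [Real.exp_log (div_pos hn hd), ← tsum_mul_left]
  congr 1
  funext k
  rw [conv_bern_eq, conv_bern_eq, mul_max_of_nonneg _ _ hd.le, mul_zero, mul_sub, ← mul_assoc,
    mul_div_cancel₀ _ hd.ne']
  congr 1
  ring
end

section
/- Let X be a probability distribution on the nonnegative integers and ε > 0. Then d_ε(1+X ‖ X) ≥ (1/2) · Σ_{k ∈ ℕ : X(k) ≥ 2e^ε·X(k+1)} X(k); that is, d_ε(1+X ‖ X) is at least half the probability, under k ← X, that X(k) ≥ 2e^ε·X(k+1). -/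
/-- `d_ε(1+X ‖ X)` is at least half the probability, under
`k ← X`, that `X k ≥ 2·e^ε·X (k+1)`. -/
theorem stmt_18 (ε : ℝ) (hε : 0 < ε)
    (X : ℕ → ℝ) (hXnn : ∀ k, 0 ≤ X k) (hXsum : ∑' k, X k = 1) :
    (1 / 2) * ∑' k : {k : ℕ | 2 * Real.exp ε * X (k + 1) ≤ X k}, X (k : ℕ)
      ≤ hsDiv ε (shift1 X) X := by
  have hs : Summable X := by
    by_contra h
    rw [tsum_eq_zero_of_not_summable h] at hXsum
    norm_num at hXsum
  have hE : 0 < Real.exp ε := Real.exp_pos ε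
  have hs1 : Summable (shift1 X) := by
    rw [← summable_nat_add_iff 1]
    simpa [shift1] using hs
  have hnn1 : ∀ k, 0 ≤ shift1 X k := by
    intro k
    unfold shift1
    split_ifs
    · exact le_rfl
    · exact hXnn _
  have hS : Summable (fun k => max (shift1 X k - Real.exp ε * X k) 0) := by
    refine Summable.of_nonneg_of_le (fun k => le_max_right _ _) (fun k => ?_) hs1
    refine max_le ?_ (hnn1 k)
    have := mul_nonneg hE.le (hXnn k)
    linarith
  have hS' := (summable_nat_add_iff 1).2 hS
  unfold hsDiv
  rw [tsum_subtype {k : ℕ | 2 * Real.exp ε * X (k + 1) ≤ X k} X, ← tsum_mul_left,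
    hS.tsum_eq_zero_add]
  refine le_add_of_nonneg_of_le (le_max_right _ _) ?_
  refine Summable.tsum_le_tsum (fun k => ?_) ((hs.indicator _).mul_left _) hS'
  by_cases hk : k ∈ {k : ℕ | 2 * Real.exp ε * X (k + 1) ≤ X k}
  · rw [Set.indicator_of_mem hk]
    refine le_max_of_le_left ?_
    have hk2 : 2 * Real.exp ε * X (k + 1) ≤ X k := hk
    have h3 : shift1 X (k + 1) = X k := by simp [shift1]
    rw [h3]
    linarith
  · rw [Set.indicator_of_notMem hk]
    simp
end

section
/- For every integer n ≥ 1 and reals p ∈ (0, 1/2) and ε > 0 satisfying 4·e^ε·p < 1/2, one has d_ε(1+Bin(n,p) ‖ Bin(n,p)) ≥ (1/(2·√(2n))) · exp(−4·n·e^ε·p·ln(4·e^ε)). -/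
/-- The binomial distribution `Bin(n,p)` as a pmf on ℕ. -/
noncomputable def binom (n : ℕ) (p : ℝ) : ℕ → ℝ :=
  fun k => (n.choose k : ℝ) * p ^ k * (1 - p) ^ (n - k)

lemma hs_ge (ε p : ℝ) (n m : ℕ) :
    binom n p m - Real.exp ε * binom n p (m+1) ≤ hsDiv ε (shift1 (binom n p)) (binom n p) := by
  have hs : Summable (fun k => max (shift1 (binom n p) k - Real.exp ε * binom n p k) 0) := by
    apply summable_of_ne_finset_zero (s := Finset.range (n+2))
    intro k hk
    have hk : n + 2 ≤ k := by simpa using hk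
    have h1 : n.choose k = 0 := Nat.choose_eq_zero_of_lt (by omega)
    have h2 : n.choose (k-1) = 0 := Nat.choose_eq_zero_of_lt (by omega)
    simp [shift1, binom, h1, h2]
  have := hs.le_tsum (m+1) (fun j _ => le_max_right _ _)
  refine le_trans ?_ this
  refine le_trans ?_ (le_max_left _ _)
  simp [shift1]

lemma half_le (a p : ℝ) (n m : ℕ) (hp0 : 0 < p) (hp1 : p < 1/2) (ha : 0 < a) (hm : m < n)
    (h : 4 * a * n * p ≤ m + 1) :
    a * binom n p (m+1) ≤ binom n p m / 2 := by
  have h1 : (n.choose (m+1) : ℝ) * (m+1) = n.choose m * (n - m) := by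
    have := Nat.choose_succ_right_eq n m
    have h2 : ((n - m : ℕ) : ℝ) = n - m := by push_cast [hm.le]; ring
    rw [← h2]; exact_mod_cast this
  have h3 : n - m = (n - (m+1)) + 1 := by omega
  unfold binom
  rw [h3, pow_succ, pow_succ]
  have hX : 0 < p ^ m * (1-p)^(n-(m+1)) := by
    have : 0 < 1 - p := by linarith
    positivity
  have key : a * n.choose (m+1) * p ≤ n.choose m * (1-p) / 2 := by
    have hm0 : (0:ℝ) < m + 1 := by positivity
    have hc : (0:ℝ) ≤ n.choose m := by positivity
    refine le_of_mul_le_mul_right ?_ hm0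
    have h4 : a * p * (n - m) ≤ (1-p) / 2 * (m+1) := by
      have : 0 ≤ a * p * m := by positivity
      nlinarith
    calc a * n.choose (m+1) * p * (m+1) = a * p * (n.choose (m+1) * (m+1)) := by ring
      _ = n.choose m * (a * p * (n-m)) := by rw [h1]; ring
      _ ≤ n.choose m * ((1-p) / 2 * (m+1)) := by gcongr
      _ = _ := by ring
  have := mul_le_mul_of_nonneg_right key hX.le
  nlinarith

lemma fact_le (n : ℕ) (hn : 1 ≤ n) :
    (n.factorial : ℝ) ≤ Real.exp 1 * √n * (n / Real.exp 1)^n := by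
  obtain ⟨k, rfl⟩ : ∃ k, n = k + 1 := ⟨n-1, by omega⟩
  have h := Stirling.stirlingSeq'_antitone (Nat.zero_le k)
  simp only [Function.comp, Nat.succ_eq_add_one, zero_add, Stirling.stirlingSeq_one] at h
  unfold Stirling.stirlingSeq at h
  rw [div_le_iff₀ (by positivity)] at h
  refine h.trans (le_of_eq ?_)
  rw [Real.sqrt_mul (by norm_num)]
  field_simp

lemma choose_ge (n m : ℕ) (hm : 1 ≤ m) (hmn : m < n) :
    √(2 * Real.pi * n) * (n:ℝ)^n ≤
      n.choose m * (m:ℝ)^m * ((n - m : ℕ):ℝ)^(n-m) * (Real.exp 1 ^ 2 * (n / 2)) := by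
  have h1 := Stirling.le_factorial_stirling n
  obtain ⟨l, rfl⟩ : ∃ l, n = m + l := ⟨n - m, by omega⟩
  have hl : 1 ≤ l := by omega
  have h2 := fact_le m hm
  have h3 := fact_le l hl
  have h4 : ((m+l).factorial : ℝ) = (m+l).choose m * m.factorial * l.factorial := by
    have := Nat.add_choose_mul_factorial_mul_factorial m l
    rw [← Nat.choose_symm_add] at this
    exact_mod_cast this.symm
  rw [Nat.add_sub_cancel_left]
  have h5 : √(m:ℝ) * √l ≤ (m + l)/2 := by
    nlinarith [sq_nonneg (√(m:ℝ) - √l), Real.sq_sqrt (Nat.cast_nonneg (α := ℝ) m),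
      Real.sq_sqrt (Nat.cast_nonneg (α := ℝ) l)]
  have he : 0 < Real.exp 1 := Real.exp_pos 1
  have h6 : √(2 * Real.pi * (m+l:ℕ)) * ((m+l:ℕ) / Real.exp 1)^(m+l) ≤
      (m+l).choose m * (Real.exp 1 * √m * (m / Real.exp 1)^m) *
        (Real.exp 1 * √l * (l / Real.exp 1)^l) := by
    refine h1.trans ?_
    rw [h4]
    gcongr
  have h7 : √(2 * Real.pi * (m+l:ℕ)) * ((m+l:ℕ):ℝ)^(m+l) ≤
      (m+l).choose m * (m:ℝ)^m * (l:ℝ)^l * (Real.exp 1^2 * (√m * √l)) := by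
    have := mul_le_mul_of_nonneg_right h6 (pow_pos he (m+l)).le
    calc _ = √(2 * Real.pi * (m+l:ℕ)) * ((m+l:ℕ) / Real.exp 1)^(m+l) * Real.exp 1 ^(m+l) := by
          rw [div_pow]; field_simp
      _ ≤ _ := this
      _ = _ := by rw [div_pow, div_pow, pow_add]; field_simp
  refine h7.trans ?_
  push_cast
  gcongr

lemma binom_ge (n m : ℕ) (hm : 1 ≤ m) (hmn : m < n) (a p : ℝ) (ha : 0 < a) (hp0 : 0 < p)
    (hp1 : p < 1/2) (h1 : m ≤ 4 * a * n * p) (h2 : 2 * n * p ≤ m) :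
    1 / √(2 * n) * (1 / (4*a))^m ≤ binom n p m := by
  have hc := choose_ge n m hm hmn
  have hn0 : (0:ℝ) < n := by exact_mod_cast (by omega : 0 < n)
  have hm0 : (1:ℝ) ≤ m := by exact_mod_cast hm
  have hd : (0:ℝ) < ((n-m:ℕ):ℝ) := by exact_mod_cast (by omega : 0 < n - m)
  have hdd : ((n-m:ℕ):ℝ) = n - m := by push_cast [hmn.le]; ring
  have hA : (1/(4*a))^m ≤ (n*p/m)^m := by
    refine pow_le_pow_left₀ (by positivity) ?_ m
    rw [div_le_div_iff₀ (by positivity) (by positivity)]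
    linarith
  have hB : 3/2 ≤ (n*(1-p)/((n-m:ℕ):ℝ))^(n-m) := by
    have hb := one_add_mul_le_pow (a := n*(1-p)/((n-m:ℕ):ℝ) - 1) (by
      have : 0 < 1 - p := by linarith
      have : 0 ≤ n*(1-p)/((n-m:ℕ):ℝ) := by positivity
      linarith) (n-m)
    have e : 1 + ((n-m:ℕ):ℝ) * (n*(1-p)/((n-m:ℕ):ℝ) - 1) = 1 + m - n*p := by
      field_simp; rw [hdd]; ring
    rw [e, add_sub_cancel] at hb
    linarith
  have hpow : (n:ℝ)^n = (n:ℝ)^m * (n:ℝ)^(n-m) := by rw [← pow_add]; congr 1; omega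
  have hE : Real.exp 1 ^ 2 < 7.5 := by
    have := Real.exp_one_lt_d9
    have := Real.exp_pos 1
    nlinarith
  have hpi : 2.4 * √n ≤ √(2 * Real.pi * n) := by
    rw [Real.sqrt_mul (by positivity)]
    gcongr
    apply Real.le_sqrt_of_sq_le
    nlinarith [Real.pi_gt_three]
  have hs : √(n:ℝ) * √n = n := Real.mul_self_sqrt hn0.le
  have hsp : 0 < √(n:ℝ) := Real.sqrt_pos.2 hn0
  have hq : 0 < 1 - p := by linarith
  have h3 : 0.64 / √n * (n:ℝ)^n ≤ n.choose m * (m:ℝ)^m * ((n - m : ℕ):ℝ)^(n-m) := by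
    set Z := n.choose m * (m:ℝ)^m * ((n - m : ℕ):ℝ)^(n-m)
    have hZ : 0 ≤ Z := by positivity
    have : 2.4 * √n * (n:ℝ)^n ≤ Z * (7.5 * (n/2)) :=
      calc _ ≤ √(2 * Real.pi * n) * (n:ℝ)^n := by gcongr
        _ ≤ _ := hc
        _ ≤ _ := by gcongr
    rw [div_mul_eq_mul_div, div_le_iff₀ hsp]
    have h8 : 2.4 * (n:ℝ)^n ≤ Z * (3.75 * √n) := by
      refine le_of_mul_le_mul_right ?_ hsp
      calc _ = 2.4 * √n * (n:ℝ)^n := by ring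
        _ ≤ _ := this
        _ = Z * 3.75 * (√n * √n) := by rw [hs]; ring
        _ = _ := by ring
    linarith
  have h9 : 0.64 / √n * ((n*p/m)^m * (n*(1-p)/((n-m:ℕ):ℝ))^(n-m)) ≤ binom n p m := by
    have hX : 0 < p^m * (1-p)^(n-m) / ((m:ℝ)^m * ((n - m : ℕ):ℝ)^(n-m)) := by positivity
    have := mul_le_mul_of_nonneg_right h3 hX.le
    unfold binom
    calc _ = _ := ?_
      _ ≤ _ := this
      _ = _ := by field_simp
    rw [hpow, div_pow, div_pow, mul_pow, mul_pow]
    field_simp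
  refine le_trans ?_ h9
  have h10 : 1 / √(2 * (n:ℝ)) ≤ 0.64 / √n * (3/2) := by
    rw [Real.sqrt_mul (by norm_num)]
    have : 1.4 ≤ √(2:ℝ) := Real.le_sqrt_of_sq_le (by norm_num)
    rw [div_mul_eq_mul_div, div_le_div_iff₀ (by positivity) hsp]
    nlinarith
  calc _ ≤ 0.64 / √n * (3/2) * (n*p/m)^m := by gcongr
    _ = 0.64 / √n * ((n*p/m)^m * (3/2)) := by ring
    _ ≤ _ := by gcongr

/-- lower bound on `d_ε(1+Bin(n,p) ‖ Bin(n,p))`. -/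
theorem stmt_19 (n : ℕ) (hn : 1 ≤ n) (p ε : ℝ) (hp0 : 0 < p) (hp1 : p < 1 / 2)
    (hε : 0 < ε) (h : 4 * Real.exp ε * p < 1 / 2) :
    (1 / (2 * Real.sqrt (2 * (n : ℝ)))) *
        Real.exp (-(4 * (n : ℝ) * Real.exp ε * p * Real.log (4 * Real.exp ε)))
      ≤ hsDiv ε (shift1 (binom n p)) (binom n p) := by
  have ha : 1 < Real.exp ε := Real.one_lt_exp_iff.2 hε
  set a := Real.exp ε with hadef
  have hn0 : (1:ℝ) ≤ n := by exact_mod_cast hn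
  have ha0 : 0 < a := by linarith
  have hpos : 0 < 4 * a * n * p := by positivity
  obtain ⟨m, hm⟩ : ∃ m, ⌈4 * a * n * p⌉₊ = m + 1 :=
    ⟨⌈4 * a * n * p⌉₊ - 1, by have := Nat.ceil_pos.2 hpos; omega⟩
  have hm1 : 4 * a * n * p ≤ m + 1 := by
    have := Nat.le_ceil (4 * a * n * p); rw [hm] at this; exact_mod_cast this
  have hm2 : m < 4 * a * n * p := by
    apply Nat.lt_ceil.1; omega
  have hmn : m < n := by
    have : (m:ℝ) < n := by nlinarith
    exact_mod_cast this
  have hL : 0 < Real.log (4 * a) := Real.log_pos (by linarith)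
  suffices hh : 1 / √(2 * n) * Real.exp (-(4 * (n : ℝ) * a * p * Real.log (4 * a)))
      ≤ binom n p m by
    have h1 := hs_ge ε p n m
    have h2 := half_le a p n m hp0 hp1 ha0 hmn hm1
    rw [← hadef] at h1
    have : (1 / (2 * √(2 * (n : ℝ)))) = 1 / √(2*n) / 2 := by rw [div_div, mul_comm]
    rw [this]
    linarith
  rcases Nat.eq_zero_or_pos m with h0 | h0
  · subst h0
    have he : Real.exp (-(4 * (n : ℝ) * a * p * Real.log (4 * a))) ≤ 1 := by
      apply Real.exp_le_one_iff.2
      have : 0 < 4 * (n : ℝ) * a * p * Real.log (4 * a) := by positivity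
      linarith
    have h3 : 1 / √(2 * (n:ℝ)) ≤ 3/4 := by
      have : 4/3 ≤ √(2 * (n:ℝ)) := Real.le_sqrt_of_sq_le (by nlinarith)
      rw [div_le_iff₀ (by linarith)]
      linarith
    have hb := one_add_mul_le_pow (a := -p) (by linarith) n
    have hnp : n * p ≤ 1/4 := by
      have : 0 < n * p := by positivity
      norm_num at hm1
      nlinarith
    have hbi : binom n p 0 = (1 + -p)^n := by simp [binom, sub_eq_add_neg]
    rw [hbi]
    calc _ ≤ (3/4:ℝ) * 1 := by gcongr
      _ ≤ _ := by linarith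
  · have hm0 : (1:ℝ) ≤ m := by exact_mod_cast h0
    have hnp : 0 < n * p := by positivity
    refine le_trans ?_ (binom_ge n m h0 hmn a p ha0 hp0 hp1 hm2.le (by nlinarith))
    gcongr
    have : (1/(4*a))^m = Real.exp (-(m * Real.log (4*a))) := by
      rw [Real.exp_neg, Real.exp_nat_mul, Real.exp_log (by positivity), one_div, inv_pow]
    rw [this]
    apply Real.exp_le_exp.2
    apply neg_le_neg
    gcongr
    linarith
end
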